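/- In the calculus λ_S, the shift-reset axiom is validated by applicative bisimilarity: for every closed term S k.t, we have S k.⟨t⟩ ≈_app S k.t. -/

import Mathlib

namespace LambdaS

/-- Terms of the calculus λ_S: variables, λ-abstractions, applications,
the shift operator `S k.t`, and the reset delimiter `⟨t⟩`. -/
inductive Tm : Type
  | var : ℕ → Tm
  | lam : ℕ → Tm → Tm
  | app : Tm → Tm → Tm
  | shift : ℕ → Tm → Tm
  | reset : Tm → Tm
  deriving DecidableEq

/-- A variable fresh for a finite set of variables. -/
def fresh (s : Finset ℕ) : ℕ := if h : s.Nonempty then s.max' h + 1 else 0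

namespace Tm

/-- Free variables. -/
def fv : Tm → Finset ℕ
  | var x => {x}
  | lam x t => fv t \ {x}
  | app t u => fv t ∪ fv u
  | shift k t => fv t \ {k}
  | reset t => fv t

def size : Tm → ℕ
  | var _ => 1
  | lam _ t => size t + 1
  | app t u => size t + size u + 1
  | shift _ t => size t + 1
  | reset t => size t + 1

/-- Renaming of free occurrences of a variable (used for α-renaming with a
fresh target variable). -/
def rename : Tm → ℕ → ℕ → Tm
  | var w, y, z => if w = y then var z else var w
  | lam w t, y, z => if w = y then lam w t else lam w (rename t y z)
  | app t u, y, z => app (rename t y z) (rename u y z)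
  | shift w t, y, z => if w = y then shift w t else shift w (rename t y z)
  | reset t, y, z => reset (rename t y z)

theorem size_rename (t : Tm) (y z : ℕ) : size (rename t y z) = size t := by
  induction t generalizing y z with
  | var w => simp only [rename]; split <;> rfl
  | lam w t ih => simp only [rename]; split <;> simp [size, ih]
  | app t u iht ihu => simp [rename, size, iht, ihu]
  | shift w t ih => simp only [rename]; split <;> simp [size, ih]
  | reset t ih => simp [rename, size, ih]

/-- Capture-avoiding substitution `t{v/x}` of `v` for the free occurrences of
`x` in `t`; bound variables are α-renamed when needed. -/
def subst : Tm → ℕ → Tm → Tm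
  | var w, x, v => if w = x then v else var w
  | lam y t, x, v =>
      if y = x then lam y t
      else if y ∈ fv v then
        lam (fresh (fv v ∪ fv t ∪ {x}))
          (subst (rename t y (fresh (fv v ∪ fv t ∪ {x}))) x v)
      else lam y (subst t x v)
  | app t u, x, v => app (subst t x v) (subst u x v)
  | shift y t, x, v =>
      if y = x then shift y t
      else if y ∈ fv v then
        shift (fresh (fv v ∪ fv t ∪ {x}))
          (subst (rename t y (fresh (fv v ∪ fv t ∪ {x}))) x v)
      else shift y (subst t x v)
  | reset t, x, v => reset (subst t x v)
termination_by t _ _ => size t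
decreasing_by all_goals simp [size_rename, size] <;> omega

end Tm

/-- Values: variables and λ-abstractions. -/
inductive IsValue : Tm → Prop
  | var (x : ℕ) : IsValue (Tm.var x)
  | lam (x : ℕ) (t : Tm) : IsValue (Tm.lam x t)

/-- A term is closed if it has no free variables. -/
def Closed (t : Tm) : Prop := t.fv = ∅

/-- Pure evaluation contexts E ::= □ | v E | E t. -/
inductive ECtx : Type
  | hole : ECtx
  | appR : (v : Tm) → IsValue v → ECtx → ECtx
  | appL : ECtx → Tm → ECtx

def ECtx.plug : ECtx → Tm → Tm
  | .hole, t => t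
  | .appR v _ E, t => Tm.app v (E.plug t)
  | .appL E u, t => Tm.app (E.plug t) u

def ECtx.fv : ECtx → Finset ℕ
  | .hole => ∅
  | .appR v _ E => v.fv ∪ E.fv
  | .appL E u => E.fv ∪ u.fv

/-- Composition of pure contexts: `(E.comp E').plug t = E.plug (E'.plug t)`. -/
def ECtx.comp : ECtx → ECtx → ECtx
  | .hole, E' => E'
  | .appR v hv E, E' => .appR v hv (E.comp E')
  | .appL E u, E' => .appL (E.comp E') u

/-- Evaluation contexts F ::= □ | v F | F t | ⟨F⟩. -/
inductive FCtx : Type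
  | hole : FCtx
  | appR : (v : Tm) → IsValue v → FCtx → FCtx
  | appL : FCtx → Tm → FCtx
  | reset : FCtx → FCtx

def FCtx.plug : FCtx → Tm → Tm
  | .hole, t => t
  | .appR v _ F, t => Tm.app v (F.plug t)
  | .appL F u, t => Tm.app (F.plug t) u
  | .reset F, t => Tm.reset (F.plug t)

def FCtx.fv : FCtx → Finset ℕ
  | .hole => ∅
  | .appR v _ F => v.fv ∪ F.fv
  | .appL F u => F.fv ∪ u.fv
  | .reset F => F.fv

/-- The function `λx.⟨E[x]⟩` representing the captured delimited context `E`,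
where `x` is chosen fresh (in particular `x ∉ fv E`). -/
def contFun (E : ECtx) : Tm :=
  Tm.lam (fresh E.fv) (Tm.reset (E.plug (Tm.var (fresh E.fv))))

/-- Call-by-value reduction →_v of λ_S. -/
inductive Red : Tm → Tm → Prop
  | beta (F : FCtx) (x : ℕ) (t v : Tm) :
      IsValue v →
      Red (F.plug (Tm.app (Tm.lam x t) v)) (F.plug (t.subst x v))
  | capture (F : FCtx) (E : ECtx) (k : ℕ) (t : Tm) :
      Red (F.plug (Tm.reset (E.plug (Tm.shift k t))))
          (F.plug (Tm.reset (t.subst k (contFun E))))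
  | resetVal (F : FCtx) (v : Tm) :
      IsValue v →
      Red (F.plug (Tm.reset v)) (F.plug v)

/-- A stuck term: not a value and unable to reduce. -/
def Stuck (t : Tm) : Prop := ¬ IsValue t ∧ ∀ t', ¬ Red t t'

/-- Normal forms: values and stuck terms. -/
def NormalForm (t : Tm) : Prop := IsValue t ∨ Stuck t

/-- A control-stuck term has the form E[S k.t]. -/
def ControlStuck (t : Tm) : Prop :=
  ∃ (E : ECtx) (k : ℕ) (s : Tm), t = E.plug (Tm.shift k s)

/-- Evaluation: `t ⇓ t'` iff `t →_v* t'` and `t'` is a normal form. -/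
def Evals (t t' : Tm) : Prop := Relation.ReflTransGen Red t t' ∧ NormalForm t'

/-- `t` evaluates to some value. -/
def EvalsToValue (t : Tm) : Prop := ∃ v, Relation.ReflTransGen Red t v ∧ IsValue v

/-- `t` evaluates to some control-stuck term. -/
def EvalsToStuck (t : Tm) : Prop :=
  ∃ s, Relation.ReflTransGen Red t s ∧ ControlStuck s

/-- General contexts C ::= □ | λx.C | t C | C t | S k.C | ⟨C⟩. -/
inductive Ctx : Type
  | hole : Ctx
  | lam : ℕ → Ctx → Ctx
  | appL : Ctx → Tm → Ctx
  | appR : Tm → Ctx → Ctx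
  | shift : ℕ → Ctx → Ctx
  | reset : Ctx → Ctx

def Ctx.plug : Ctx → Tm → Tm
  | .hole, t => t
  | .lam x C, t => Tm.lam x (C.plug t)
  | .appL C u, t => Tm.app (C.plug t) u
  | .appR u C, t => Tm.app u (C.plug t)
  | .shift k C, t => Tm.shift k (C.plug t)
  | .reset C, t => Tm.reset (C.plug t)

def Ctx.fv : Ctx → Finset ℕ
  | .hole => ∅
  | .lam x C => C.fv \ {x}
  | .appL C u => C.fv ∪ u.fv
  | .appR u C => u.fv ∪ C.fv
  | .shift k C => C.fv \ {k}
  | .reset C => C.fv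

/-- Contextual equivalence ≈ for the relaxed semantics (on closed terms):
tests evaluation to values and evaluation to control-stuck terms in every
closed context. -/
def CtxEquiv (t0 t1 : Tm) : Prop :=
  ∀ C : Ctx, C.fv = ∅ →
    (EvalsToValue (C.plug t0) ↔ EvalsToValue (C.plug t1)) ∧
    (EvalsToStuck (C.plug t0) ↔ EvalsToStuck (C.plug t1))

/-- Contextual equivalence ≈_p for the original semantics: tests evaluation to
values of ⟨C[·]⟩ in every closed context C. -/
def CtxEquivP (t0 t1 : Tm) : Prop :=
  ∀ C : Ctx, C.fv = ∅ →
    (EvalsToValue (Tm.reset (C.plug t0)) ↔ EvalsToValue (Tm.reset (C.plug t1)))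

/-- Contextual equivalence ≈_E testing only with closed evaluation contexts. -/
def ECtxEquiv (t0 t1 : Tm) : Prop :=
  ∀ F : FCtx, F.fv = ∅ →
    (EvalsToValue (F.plug t0) ↔ EvalsToValue (F.plug t1)) ∧
    (EvalsToStuck (F.plug t0) ↔ EvalsToStuck (F.plug t1))

/-- Applicative simulation. -/
def IsAppSim (R : Tm → Tm → Prop) : Prop :=
  ∀ t0 t1, R t0 t1 →
    (∀ t0', Red t0 t0' →
      ∃ t1', Relation.ReflTransGen Red t1 t1' ∧ R t0' t1') ∧
    (∀ x t0', t0 = Tm.lam x t0' →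
      ∃ t1', Relation.ReflTransGen Red t1 (Tm.lam x t1') ∧
        ∀ v, IsValue v → Closed v → R (t0'.subst x v) (t1'.subst x v)) ∧
    (∀ (E0 : ECtx) (k : ℕ) (t0' : Tm), t0 = E0.plug (Tm.shift k t0') →
      ∃ (E1 : ECtx) (t1' : Tm),
        Relation.ReflTransGen Red t1 (E1.plug (Tm.shift k t1')) ∧
        ∀ E : ECtx, E.fv = ∅ →
          R (Tm.reset (t0'.subst k (contFun (E.comp E0))))
            (Tm.reset (t1'.subst k (contFun (E.comp E1)))))

/-- Applicative bisimulation. -/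
def IsAppBisim (R : Tm → Tm → Prop) : Prop :=
  IsAppSim R ∧ IsAppSim (fun a b => R b a)

/-- Applicative bisimilarity ≈_app: the largest applicative bisimulation. -/
def AppBisim (t0 t1 : Tm) : Prop := ∃ R, IsAppBisim R ∧ R t0 t1

/-- Simultaneous substitution (used only with closing substitutions mapping
variables to closed values, so no capture can occur). -/
def Tm.msubst : Tm → (ℕ → Tm) → Tm
  | .var x, σ => σ x
  | .lam x t, σ => Tm.lam x (t.msubst (Function.update σ x (Tm.var x)))
  | .app t u, σ => Tm.app (t.msubst σ) (u.msubst σ)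
  | .shift k t, σ => Tm.shift k (t.msubst (Function.update σ k (Tm.var k)))
  | .reset t, σ => Tm.reset (t.msubst σ)

/-- Open extension of a relation on closed terms: relate `t0σ` and `t1σ` for
every substitution σ mapping variables to closed values. -/
def OpenExt (R : Tm → Tm → Prop) (t0 t1 : Tm) : Prop :=
  ∀ σ : ℕ → Tm, (∀ x, IsValue (σ x) ∧ Closed (σ x)) →
    R (t0.msubst σ) (t1.msubst σ)

/-- ω := λx.x x. -/
def omegaTm : Tm := Tm.lam 0 (Tm.app (Tm.var 0) (Tm.var 0))

/-- Ω := ω ω, a diverging term. -/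
def OmegaTm : Tm := Tm.app omegaTm omegaTm

/-!
When the stuck term `S k.t` captures its context, the captured body is put under a reset, so
`S k.⟨t⟩` and `S k.t` become `⟨⟨t'⟩⟩` and `⟨t'⟩` for the same `t'`. Doubling a reset is harmless:
`⟨u⟩` is neither a value nor control-stuck, so `⟨⟨u⟩⟩` can only copy the steps of `⟨u⟩` inside
the outer reset, until `u` is a value and both resets disappear. Hence the shift-reset pairs, the
doubled resets and the identity together form an applicative bisimulation.
-/

theorem ECtx.comp_hole (E : ECtx) : E.comp .hole = E := by
  induction E with
  | hole => rfl
  | appR v hv E ih => rw [ECtx.comp, ih]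
  | appL E u ih => rw [ECtx.comp, ih]

theorem ECtx.plug_eq_shift_iff {E : ECtx} {u t : Tm} {k : ℕ} :
    E.plug u = .shift k t ↔ E = .hole ∧ u = .shift k t := by
  cases E <;> simp [ECtx.plug]

theorem ECtx.plug_shift_ne_reset (E : ECtx) (k : ℕ) (s u : Tm) :
    E.plug (.shift k s) ≠ .reset u := by
  cases E <;> simp [ECtx.plug]

theorem not_red_shift (k : ℕ) (t t' : Tm) : ¬ Red (.shift k t) t' := by
  intro h
  generalize hs : Tm.shift k t = s at h
  cases h with
  | beta F | capture F | resetVal F => cases F <;> simp [FCtx.plug] at hs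

theorem Red.reset {t t' : Tm} (h : Red t t') : Red (.reset t) (.reset t') := by
  cases h with
  | beta F x t v hv => exact .beta (.reset F) x t v hv
  | capture F E k t => exact .capture (.reset F) E k t
  | resetVal F v hv => exact .resetVal (.reset F) v hv

theorem red_reset_iff {u t' : Tm} :
    Red (.reset u) t' ↔
      (IsValue u ∧ t' = u) ∨
      (∃ (E : ECtx) (k : ℕ) (s : Tm),
        u = E.plug (.shift k s) ∧ t' = .reset (s.subst k (contFun E))) ∨
      ∃ u', Red u u' ∧ t' = .reset u' := by
  constructor
  · intro h
    generalize hr : Tm.reset u = r at h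
    cases h with
    | beta F x t v hv =>
      cases F <;> simp only [FCtx.plug, Tm.reset.injEq, reduceCtorEq] at hr
      exact .inr (.inr ⟨_, hr ▸ .beta _ x t v hv, rfl⟩)
    | capture F E k t =>
      cases F <;> simp only [FCtx.plug, Tm.reset.injEq, reduceCtorEq] at hr
      · exact .inr (.inl ⟨E, k, t, hr, rfl⟩)
      · exact .inr (.inr ⟨_, hr ▸ .capture _ E k t, rfl⟩)
    | resetVal F v hv =>
      cases F <;> simp only [FCtx.plug, Tm.reset.injEq, reduceCtorEq] at hr
      · exact .inl ⟨hr ▸ hv, hr.symm⟩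
      · exact .inr (.inr ⟨_, hr ▸ .resetVal _ v hv, rfl⟩)
  · rintro (⟨hv, rfl⟩ | ⟨E, k, s, rfl, rfl⟩ | ⟨u', hu, rfl⟩)
    · exact .resetVal .hole _ hv
    · exact .capture .hole E k s
    · exact hu.reset

theorem red_reset_reset_iff {u t' : Tm} :
    Red (.reset (.reset u)) t' ↔ ∃ u', Red (.reset u) u' ∧ t' = .reset u' := by
  rw [red_reset_iff]
  constructor
  · rintro (⟨hv, -⟩ | ⟨E, k, s, hE, -⟩ | h)
    · nomatch hv
    · exact (E.plug_shift_ne_reset k s u hE.symm).elim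
    · exact h
  · exact fun h => .inr (.inr h)

theorem Red.eq_or_eq_reset {u t' : Tm} (h : Red (.reset u) t') :
    (IsValue u ∧ t' = u) ∨ ∃ u', t' = .reset u' := by
  rcases red_reset_iff.mp h with hv | ⟨_, _, _, -, rfl⟩ | ⟨u', -, rfl⟩
  · exact .inl hv
  · exact .inr ⟨_, rfl⟩
  · exact .inr ⟨u', rfl⟩

/-- The three clauses of an applicative simulation for a single pair `(t₀, t₁)`: every reduction
step, λ-abstraction or control-stuck form of `t₀` is matched by `t₁` up to `R`. Thus `IsAppSim R`
says that `R` is contained in `AppMatch R`. -/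
def AppMatch (R : Tm → Tm → Prop) (t₀ t₁ : Tm) : Prop :=
  (∀ t₀', Red t₀ t₀' → ∃ t₁', Relation.ReflTransGen Red t₁ t₁' ∧ R t₀' t₁') ∧
  (∀ x t₀', t₀ = .lam x t₀' →
    ∃ t₁', Relation.ReflTransGen Red t₁ (.lam x t₁') ∧
      ∀ v, IsValue v → Closed v → R (t₀'.subst x v) (t₁'.subst x v)) ∧
  (∀ (E₀ : ECtx) (k : ℕ) (t₀' : Tm), t₀ = E₀.plug (.shift k t₀') →
    ∃ (E₁ : ECtx) (t₁' : Tm),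
      Relation.ReflTransGen Red t₁ (E₁.plug (.shift k t₁')) ∧
      ∀ E : ECtx, E.fv = ∅ →
        R (.reset (t₀'.subst k (contFun (E.comp E₀))))
          (.reset (t₁'.subst k (contFun (E.comp E₁)))))

namespace AppMatch

variable {R : Tm → Tm → Prop}

theorem refl (hR : ∀ t, R t t) (t : Tm) : AppMatch R t t :=
  ⟨fun t' h => ⟨t', .single h, hR t'⟩,
    fun _ t' h => ⟨t', h ▸ .refl, fun _ _ _ => hR _⟩,
    fun E _ t' h => ⟨E, t', h ▸ .refl, fun _ _ => hR _⟩⟩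

theorem reset_left {u t₁ : Tm}
    (h : ∀ t₀', Red (.reset u) t₀' → ∃ t₁', Relation.ReflTransGen Red t₁ t₁' ∧ R t₀' t₁') :
    AppMatch R (.reset u) t₁ :=
  ⟨h, fun _ _ => nofun, fun E k s hE => (E.plug_shift_ne_reset k s u hE.symm).elim⟩

theorem shift {k : ℕ} {s t : Tm}
    (h : ∀ E : ECtx, E.fv = ∅ →
      R (.reset (s.subst k (contFun E))) (.reset (t.subst k (contFun E)))) :
    AppMatch R (.shift k s) (.shift k t) := by
  refine ⟨fun _ hred => (not_red_shift _ _ _ hred).elim, fun _ _ => nofun, fun E₀ k' s' hE₀ => ?_⟩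
  obtain ⟨rfl, hs⟩ := ECtx.plug_eq_shift_iff.mp hE₀.symm
  obtain ⟨rfl, rfl⟩ := Tm.shift.inj hs
  exact ⟨.hole, t, .refl, fun E hE => by simpa only [ECtx.comp_hole] using h E hE⟩

end AppMatch

/-- The candidate bisimulation for the shift-reset axiom: the axiom itself, closed off by the
identity and by the pairs `(⟨⟨u⟩⟩, ⟨u⟩)` to which capturing a context leads. -/
inductive ShiftResetRel : Tm → Tm → Prop
  | refl (t : Tm) : ShiftResetRel t t
  | reset_reset (u : Tm) : ShiftResetRel (.reset (.reset u)) (.reset u)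
  | shift_reset (k : ℕ) (t : Tm) : ShiftResetRel (.shift k (.reset t)) (.shift k t)

namespace ShiftResetRel

theorem reset_subst (t : Tm) (k : ℕ) (v : Tm) :
    ShiftResetRel (.reset ((Tm.reset t).subst k v)) (.reset (t.subst k v)) := by
  rw [Tm.subst]
  exact .reset_reset _

theorem isAppSim : IsAppSim ShiftResetRel := by
  rintro _ _ (_ | u | ⟨k, t⟩)
  · exact AppMatch.refl ShiftResetRel.refl _
  · refine AppMatch.reset_left fun t' h => ?_
    obtain ⟨w, hw, rfl⟩ := red_reset_reset_iff.mp h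
    rcases hw.eq_or_eq_reset with ⟨-, rfl⟩ | ⟨u', rfl⟩
    · exact ⟨.reset w, .refl, .refl _⟩
    · exact ⟨.reset u', .single hw, .reset_reset u'⟩
  · exact AppMatch.shift fun E _ => reset_subst t k (contFun E)

theorem isAppSim_swap : IsAppSim (Function.swap ShiftResetRel) := by
  rintro _ _ (_ | u | ⟨k, t⟩)
  · exact AppMatch.refl (R := Function.swap ShiftResetRel) ShiftResetRel.refl _
  · refine AppMatch.reset_left fun w hw => ?_
    rcases hw.eq_or_eq_reset with ⟨hv, rfl⟩ | ⟨u', rfl⟩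
    · exact ⟨w, .tail (.single hw.reset) (.resetVal .hole w hv), .refl w⟩
    · exact ⟨.reset (.reset u'), .single hw.reset, .reset_reset u'⟩
  · exact AppMatch.shift fun E _ => reset_subst t k (contFun E)

end ShiftResetRel

theorem shift_reset_appBisim_general (k : ℕ) (t : Tm) :
    AppBisim (.shift k (.reset t)) (.shift k t) :=
  ⟨ShiftResetRel, ⟨ShiftResetRel.isAppSim, ShiftResetRel.isAppSim_swap⟩, .shift_reset k t⟩

/-- The shift-reset axiom is validated by applicative
bisimilarity: for every closed term `S k.t`, `S k.⟨t⟩ ≈_app S k.t`. -/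
theorem shift_reset_appBisim (k : ℕ) (t : Tm) (h : Closed (Tm.shift k t)) :
    AppBisim (Tm.shift k (Tm.reset t)) (Tm.shift k t) :=
  shift_reset_appBisim_general k t

end LambdaS
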